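/- arXiv:2603.05007 — 8 statements merged into one kernel-verified Lean document; each statement's English description precedes it below -/
import Mathlib

section
/- Let V be a finite set, p a pairing of V, and let k and s be positive integers. Let F be a finite family of k-element subsets of V. Then the sum, over all transversals S of p, of the number of sets e ∈ F with |e ∩ S| ≥ s equals ∑_{e ∈ F} 2^{|V|/2 − i(e)} · (∑_{j=0}^{i(e)} [k − i(e) + 2j ≥ 2s] · C(i(e), j)), where [·] equals 1 if the condition holds and 0 otherwise and C denotes the binomial coefficient. (Equivalently: if each pair independently contributes a uniformly random one of its two elements to S, then |e ∩ S| is distributed as (k − i(e))/2 plus a Binomial(i(e), 1/2) random variable, so the probability that |e ∩ S| ≥ s is p_{s,i(e)}.) -/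
open Finset

theorem aux_sum_powerset {V : Type*} [DecidableEq V] (g : ℕ → ℕ) (I J : Finset V)
    (h : Disjoint I J) :
    ∑ A ∈ (J ∪ I).powerset, g (A ∩ I).card = 2 ^ J.card * ∑ B ∈ I.powerset, g B.card := by
  induction J using Finset.induction_on with
  | empty =>
    simp only [empty_union, card_empty, pow_zero, one_mul]
    refine Finset.sum_congr rfl fun A hA => ?_
    rw [inter_eq_left.2 (mem_powerset.1 hA)]
  | insert a J ha ih =>
    have hd : Disjoint I J := h.mono_right (subset_insert _ _)
    have haI : a ∉ I := fun hh => (disjoint_left.1 h hh) (mem_insert_self _ _)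
    have haU : a ∉ J ∪ I := by simp [ha, haI]
    rw [insert_union, sum_powerset_insert haU, card_insert_of_notMem ha]
    have : ∀ A ∈ (J ∪ I).powerset, g (insert a A ∩ I).card = g (A ∩ I).card := by
      intro A _
      rw [insert_inter_of_notMem haI]
    rw [Finset.sum_congr rfl this, ih hd]
    ring

theorem aux_exists {V : Type*} [Fintype V] [DecidableEq V]
    (p : V → V) (hp_inv : ∀ v, p (p v) = v) (hp_ne : ∀ v, p v ≠ v) (I : Finset V)
    (hI : ∀ v ∈ I, p v ∉ I) : ∃ T : Finset V, I ⊆ T ∧ ∀ v, v ∈ T ↔ p v ∉ T := by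
  obtain ⟨T, hT, hmax⟩ := Finset.exists_max_image
    (univ.filter (fun T : Finset V => I ⊆ T ∧ ∀ v ∈ T, p v ∉ T)) card
    ⟨I, by simpa using hI⟩
  simp only [mem_filter, mem_univ, true_and] at hT hmax
  refine ⟨T, hT.1, fun v => ⟨hT.2 v, fun hv => ?_⟩⟩
  by_contra hvT
  have := hmax (insert v T) ⟨hT.1.trans (subset_insert _ _), by
    intro w hw
    have h1 := hp_ne w
    have h2 := hp_inv w
    have h3 := hT.2 w
    simp only [mem_insert] at hw ⊢
    rcases hw with rfl | hw
    · simp [h1, hv]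
    · rintro (h | h)
      · apply hv
        rw [← h, h2]
        exact hw
      · exact h3 hw h⟩
  rw [card_insert_of_notMem hvT] at this
  omega

theorem aux_half {V : Type*} [DecidableEq V]
    (p : V → V) (hp_inv : ∀ v, p (p v) = v) (E S : Finset V)
    (hE : ∀ v ∈ E, p v ∈ E) (hS : ∀ v, v ∈ S ↔ p v ∉ S) :
    2 * (E ∩ S).card = E.card := by
  have h1 : (E \ S).card = (E ∩ S).card := by
    refine Finset.card_bij (fun v _ => p v) ?_ ?_ ?_
    · intro v hv
      rw [mem_sdiff] at hv
      have := hS v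
      exact mem_inter.2 ⟨hE v hv.1, by tauto⟩
    · intro a _ b _ hab
      rw [← hp_inv a, hab, hp_inv]
    · intro b hb
      rw [mem_inter] at hb
      exact ⟨p b, mem_sdiff.2 ⟨hE b hb.1, (hS b).1 hb.2⟩, hp_inv b⟩
  have := card_sdiff_add_card_inter E S
  omega

theorem aux_one {V : Type*} [Fintype V] [DecidableEq V]
    (p : V → V) (hp_inv : ∀ v, p (p v) = v) (hp_ne : ∀ v, p v ≠ v)
    (s : ℕ) (e I : Finset V) (hIe : I = e.filter (fun v => p v ∉ e)) :
    ∑ S ∈ Finset.univ.filter (fun S : Finset V => ∀ v, v ∈ S ↔ p v ∉ S),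
        (if s ≤ (e ∩ S).card then 1 else 0)
      = 2 ^ (Fintype.card V / 2 - I.card) * ∑ j ∈ Finset.range (I.card + 1),
              (if e.card + 2 * j ≥ 2 * s + I.card then Nat.choose I.card j else 0) := by
  have hIsub : I ⊆ e := hIe ▸ filter_subset _ _
  have hI : ∀ v ∈ I, p v ∉ I := by
    intro v hv h
    rw [hIe, mem_filter] at hv
    exact hv.2 (hIsub h)
  obtain ⟨T, hIT, hT⟩ := aux_exists p hp_inv hp_ne I hI
  have hTc : 2 * T.card = Fintype.card V := by
    simpa using aux_half p hp_inv univ T (by simp) hT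
  let g : ℕ → ℕ := fun j => if e.card + 2 * j ≥ 2 * s + I.card then 1 else 0
  have key : ∀ S : Finset V, (∀ v, v ∈ S ↔ p v ∉ S) →
      2 * (e ∩ S).card + I.card = e.card + 2 * (S ∩ I).card := by
    intro S hS
    have h1 := aux_half p hp_inv (e \ I) S (by
      intro v hv
      have h2 := hp_inv v
      simp only [hIe, mem_sdiff, mem_filter, not_and, not_not] at hv ⊢
      refine ⟨hv.2 hv.1, fun _ => ?_⟩
      rw [h2]
      exact hv.1) hS
    have h2 := card_sdiff_add_card_eq_card hIsub
    have h3 : (e ∩ S).card = ((e \ I) ∩ S).card + (S ∩ I).card := by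
      rw [← card_union_of_disjoint]
      · congr 1
        ext v
        have := @hIsub v
        simp only [mem_inter, mem_union, mem_sdiff]
        tauto
      · rw [disjoint_left]
        intro v
        simp only [mem_inter, mem_sdiff]
        tauto
    omega
  have hbij : ∑ S ∈ Finset.univ.filter (fun S : Finset V => ∀ v, v ∈ S ↔ p v ∉ S),
        (if s ≤ (e ∩ S).card then 1 else 0) = ∑ A ∈ T.powerset, g (A ∩ I).card := by
    refine Finset.sum_bij (fun S _ => S ∩ T) ?_ ?_ ?_ ?_
    · intro S _
      exact mem_powerset.2 inter_subset_right
    · intro S hS S' hS' h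
      simp only [mem_filter, mem_univ, true_and] at hS hS'
      have h' : ∀ v, v ∈ T → (v ∈ S ↔ v ∈ S') := by
        intro v hv
        have := Finset.ext_iff.1 h v
        simp only [mem_inter] at this
        tauto
      ext v
      have h1 := h' v
      have h2 := h' (p v)
      have h3 := hT v
      have h4 := hS v
      have h5 := hS' v
      tauto
    · intro A hA
      rw [mem_powerset] at hA
      refine ⟨univ.filter (fun v => v ∈ A ∨ (v ∉ T ∧ p v ∉ A)), ?_, ?_⟩
      · simp only [mem_filter, mem_univ, true_and]
        intro v
        have h1 := @hA v
        have h2 := @hA (p v)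
        have h3 := hT v
        rw [hp_inv]
        tauto
      · ext v
        have h1 := @hA v
        simp only [mem_inter, mem_filter, mem_univ, true_and]
        tauto
    · intro S hS
      simp only [mem_filter, mem_univ, true_and] at hS
      have h1 := key S hS
      have h2 : S ∩ T ∩ I = S ∩ I := by
        rw [inter_assoc, inter_eq_right.2 hIT]
      rw [h2]
      simp only [g]
      congr 1
      apply propext
      omega
  rw [hbij]
  have h4 := aux_sum_powerset g I (T \ I) disjoint_sdiff
  rw [sdiff_union_of_subset hIT, sum_powerset_apply_card, card_sdiff_of_subset hIT] at h4
  rw [h4, ← hTc, Nat.mul_div_cancel_left _ (by norm_num)]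
  congr 1
  refine Finset.sum_congr rfl fun j _ => ?_
  simp [g]

/-- For a pairing `p` (fixed-point-free involution) of a finite set `V` and a family `F`
of `k`-element subsets of `V`, the sum over all transversals `S` of `p` of the number of
sets `e ∈ F` with `|e ∩ S| ≥ s` equals
`∑_{e ∈ F} 2^{|V|/2 − i(e)} · ∑_{j=0}^{i(e)} [k − i(e) + 2j ≥ 2s] · C(i(e), j)`,
where `i(e)` is the number of `v ∈ e` with `p v ∉ e`. -/
theorem sum_over_transversals_eq {V : Type*} [Fintype V] [DecidableEq V]
    (p : V → V) (hp_inv : ∀ v, p (p v) = v) (hp_ne : ∀ v, p v ≠ v)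
    (k s : ℕ) (hk : 0 < k) (hs : 0 < s)
    (F : Finset (Finset V)) (hF : ∀ e ∈ F, e.card = k) :
    ∑ S ∈ Finset.univ.filter (fun S : Finset V => ∀ v, v ∈ S ↔ p v ∉ S),
        (F.filter (fun e => s ≤ (e ∩ S).card)).card
      = ∑ e ∈ F,
          2 ^ (Fintype.card V / 2 - (e.filter (fun v => p v ∉ e)).card) *
            ∑ j ∈ Finset.range ((e.filter (fun v => p v ∉ e)).card + 1),
              (if k + 2 * j ≥ 2 * s + (e.filter (fun v => p v ∉ e)).card
                then Nat.choose (e.filter (fun v => p v ∉ e)).card j else 0) := by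
  simp only [card_filter]
  rw [sum_comm]
  refine Finset.sum_congr rfl fun e he => ?_
  rw [← hF e he]
  simpa only [card_filter] using aux_one p hp_inv hp_ne s e _ rfl
end

section
/- Let V be a finite set, p a pairing of V, and let k and s be positive integers. Let F be a finite family of k-element subsets of V. Then there exists a transversal S of p such that the number of sets e ∈ F with |e ∩ S| ≥ s is at most ∑_{e ∈ F} 2^{−i(e)} · (∑_{j=0}^{i(e)} [k − i(e) + 2j ≥ 2s] · C(i(e), j)), where [·] equals 1 if the condition holds and 0 otherwise and C denotes the binomial coefficient. -/
open Finset

lemma trans_exists {V : Type*} [Fintype V] [DecidableEq V]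
    (p : V → V) (hp_inv : ∀ v, p (p v) = v) (hp_ne : ∀ v, p v ≠ v) :
    ∃ S : Finset V, ∀ v, v ∈ S ↔ p v ∉ S := by
  classical
  let f := Fintype.equivFin V
  refine ⟨univ.filter (fun v => f v < f (p v)), fun v => ?_⟩
  have h : f (p v) ≠ f v := fun h => hp_ne v (f.injective h)
  simp only [mem_filter, mem_univ, true_and, hp_inv, not_lt]
  exact ⟨le_of_lt, fun h' => lt_of_le_of_ne h' h.symm⟩

lemma trans_card {V : Type*} [Fintype V] [DecidableEq V]
    (p : V → V) (hp_inv : ∀ v, p (p v) = v)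
    (e S : Finset V) (hS : ∀ v, v ∈ S ↔ p v ∉ S) :
    2 * (e ∩ S).card + (e.filter (fun v => p v ∉ e)).card
      = e.card + 2 * ((e.filter (fun v => p v ∉ e)) ∩ S).card := by
  have h1 : (e.filter (fun v => p v ∈ e)).card + (e.filter (fun v => p v ∉ e)).card = e.card :=
    card_filter_add_card_filter_not _
  have h2 : ((e ∩ S).filter (fun v => p v ∈ e)).card + ((e ∩ S).filter (fun v => p v ∉ e)).card
      = (e ∩ S).card := card_filter_add_card_filter_not _
  have h3 : (e ∩ S).filter (fun v => p v ∉ e) = (e.filter (fun v => p v ∉ e)) ∩ S := by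
    ext v; simp; tauto
  have h4 : ((e.filter (fun v => p v ∈ e)).filter (fun v => v ∈ S)).card
     + ((e.filter (fun v => p v ∈ e)).filter (fun v => v ∉ S)).card
      = (e.filter (fun v => p v ∈ e)).card := card_filter_add_card_filter_not _
  have h5 : (e ∩ S).filter (fun v => p v ∈ e)
      = (e.filter (fun v => p v ∈ e)).filter (fun v => v ∈ S) := by
    ext v; simp; tauto
  have h6 : ((e.filter (fun v => p v ∈ e)).filter (fun v => v ∈ S)).card
      = ((e.filter (fun v => p v ∈ e)).filter (fun v => v ∉ S)).card := by
    refine card_bij' (fun v _ => p v) (fun v _ => p v) ?_ ?_ ?_ ?_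
    · intro v hv
      simp only [mem_filter] at hv ⊢
      rw [hp_inv]
      exact ⟨⟨hv.1.2, hv.1.1⟩, (hS v).1 hv.2⟩
    · intro v hv
      simp only [mem_filter] at hv ⊢
      rw [hp_inv]
      refine ⟨⟨hv.1.2, hv.1.1⟩, ?_⟩
      by_contra h
      exact hv.2 ((hS v).2 h)
    · intro v _; exact hp_inv v
    · intro v _; exact hp_inv v
  rw [← h3]
  rw [h5] at h2
  omega

lemma trans_avg {V : Type*} [Fintype V] [DecidableEq V]
    (p : V → V) (hp_inv : ∀ v, p (p v) = v)
    (T : Finset (Finset V)) (hT : ∀ S, S ∈ T ↔ ∀ v, v ∈ S ↔ p v ∉ S)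
    (I : Finset V) (hI : ∀ v ∈ I, p v ∉ I) (f : ℕ → ℝ) :
    (2 : ℝ) ^ I.card * ∑ S ∈ T, f (I ∩ S).card
      = T.card * ∑ j ∈ range (I.card + 1), (I.card.choose j : ℝ) * f j := by
  have key : ∀ A ∈ I.powerset, ∑ S ∈ T, f (I ∩ S).card
      = ∑ S ∈ T, f (symmDiff (I ∩ S) A).card := by
    intro A hA
    rw [mem_powerset] at hA
    let W : Finset V := univ.filter (fun v => v ∈ A ∨ p v ∈ A)
    have hW : ∀ v, v ∈ W ↔ (v ∈ A ∨ p v ∈ A) := fun v => by simp [W]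
    have hWp : ∀ v, p v ∈ W ↔ v ∈ W := fun v => by rw [hW, hW, hp_inv]; tauto
    have hTW : ∀ S ∈ T, symmDiff S W ∈ T := by
      intro S hS
      rw [hT] at hS ⊢
      intro v
      have := hS v
      have := hWp v
      simp only [mem_symmDiff]
      tauto
    refine sum_bij' (fun S _ => symmDiff S W) (fun S _ => symmDiff S W) hTW hTW
      (fun S _ => symmDiff_symmDiff_cancel_right _ _)
      (fun S _ => symmDiff_symmDiff_cancel_right _ _) ?_
    intro S _
    congr 2
    ext v
    have h1 := hW v
    have h2 := hI v
    have h3 := @hA v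
    have h4 := @hA (p v)
    simp only [mem_symmDiff, mem_inter]
    tauto
  have h2 : ∀ S ∈ T, ∑ A ∈ I.powerset, f (symmDiff (I ∩ S) A).card
      = ∑ j ∈ range (I.card + 1), (I.card.choose j : ℝ) * f j := by
    intro S _
    have h3 : ∑ A ∈ I.powerset, f (symmDiff (I ∩ S) A).card = ∑ A ∈ I.powerset, f A.card := by
      have hm : ∀ A ∈ I.powerset, symmDiff (I ∩ S) A ∈ I.powerset := by
        intro A hA
        rw [mem_powerset] at hA ⊢
        intro v hv
        have := @hA v
        simp only [mem_symmDiff, mem_inter] at hv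
        tauto
      exact sum_bij' (fun A _ => symmDiff (I ∩ S) A) (fun A _ => symmDiff (I ∩ S) A) hm hm
        (fun A _ => symmDiff_symmDiff_cancel_left _ _)
        (fun A _ => symmDiff_symmDiff_cancel_left _ _) (fun A _ => rfl)
    rw [h3, sum_powerset_apply_card]
    simp [nsmul_eq_mul]
  have h4 := sum_congr rfl key
  rw [sum_comm (s := I.powerset) (t := T) (f := fun A S => f (symmDiff (I ∩ S) A).card),
    sum_congr rfl h2] at h4
  simpa [card_powerset] using h4

/-- For a pairing `p` of a finite set `V` and a family `F` of `k`-element subsets of `V`,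
there exists a transversal `S` of `p` such that the number of sets `e ∈ F` with
`|e ∩ S| ≥ s` is at most
`∑_{e ∈ F} 2^{−i(e)} · ∑_{j=0}^{i(e)} [k − i(e) + 2j ≥ 2s] · C(i(e), j)`,
where `i(e)` is the number of `v ∈ e` with `p v ∉ e`. -/
theorem exists_transversal_score_le {V : Type*} [Fintype V] [DecidableEq V]
    (p : V → V) (hp_inv : ∀ v, p (p v) = v) (hp_ne : ∀ v, p v ≠ v)
    (k s : ℕ) (hk : 0 < k) (hs : 0 < s)
    (F : Finset (Finset V)) (hF : ∀ e ∈ F, e.card = k) :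
    ∃ S : Finset V, (∀ v, v ∈ S ↔ p v ∉ S) ∧
      ((F.filter (fun e => s ≤ (e ∩ S).card)).card : ℝ)
        ≤ ∑ e ∈ F,
            (2 : ℝ) ^ (-((e.filter (fun v => p v ∉ e)).card : ℤ)) *
              ∑ j ∈ Finset.range ((e.filter (fun v => p v ∉ e)).card + 1),
                (if k + 2 * j ≥ 2 * s + (e.filter (fun v => p v ∉ e)).card
                  then (Nat.choose (e.filter (fun v => p v ∉ e)).card j : ℝ) else 0) := by
  classical
  let T : Finset (Finset V) := univ.filter (fun S => ∀ v, v ∈ S ↔ p v ∉ S)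
  have hT : ∀ S, S ∈ T ↔ ∀ v, v ∈ S ↔ p v ∉ S := fun S => by simp [T]
  have hTne : T.Nonempty := by
    obtain ⟨S, hS⟩ := trans_exists p hp_inv hp_ne
    exact ⟨S, (hT S).2 hS⟩
  suffices h : ∃ S ∈ T, ((F.filter (fun e => s ≤ (e ∩ S).card)).card : ℝ)
        ≤ ∑ e ∈ F,
            (2 : ℝ) ^ (-((e.filter (fun v => p v ∉ e)).card : ℤ)) *
              ∑ j ∈ Finset.range ((e.filter (fun v => p v ∉ e)).card + 1),
                (if k + 2 * j ≥ 2 * s + (e.filter (fun v => p v ∉ e)).card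
                  then (Nat.choose (e.filter (fun v => p v ∉ e)).card j : ℝ) else 0) by
    obtain ⟨S, hS, h⟩ := h
    exact ⟨S, (hT S).1 hS, h⟩
  apply exists_le_of_sum_le hTne
  apply le_of_eq
  have hcnt : ∀ S ∈ T, ((F.filter (fun e => s ≤ (e ∩ S).card)).card : ℝ)
      = ∑ e ∈ F, (((if s ≤ (e ∩ S).card then 1 else 0 : ℕ)) : ℝ) := by
    intro S _
    rw [card_filter, Nat.cast_sum]
  rw [sum_congr rfl hcnt]
  rw [sum_comm, sum_comm (s := T)]
  refine sum_congr rfl fun e he => ?_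
  rw [sum_const, nsmul_eq_mul]
  have hav := trans_avg p hp_inv T hT (e.filter (fun v => p v ∉ e))
    (fun v hv => by simp only [mem_filter] at hv ⊢; tauto)
    (fun j => if k + 2 * j ≥ 2 * s + (e.filter (fun v => p v ∉ e)).card then 1 else 0)
  have hL : ∑ S ∈ T, (((if s ≤ (e ∩ S).card then 1 else 0 : ℕ)) : ℝ)
     = ∑ S ∈ T, (if k + 2 * (e.filter (fun v => p v ∉ e) ∩ S).card
        ≥ 2 * s + (e.filter (fun v => p v ∉ e)).card then (1 : ℝ) else 0) := by
    refine sum_congr rfl fun S hS => ?_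
    have hc := trans_card p hp_inv e S ((hT S).1 hS)
    rw [hF e he] at hc
    push_cast
    refine if_congr ?_ rfl rfl
    omega
  rw [hL]
  simp only [mul_ite, mul_one, mul_zero] at hav
  rw [zpow_neg, zpow_natCast, mul_left_comm, ← hav, inv_mul_cancel_left₀ (by positivity)]
end

section
/- Let V be a finite set and F a finite family of n k-element subsets of V such that every element of V belongs to exactly ℓ members of F and every pair of distinct elements of V belongs to at most q members of F, where q ≤ ℓ. Then for every pairing p of V one has ℓ · ∑_{e ∈ F} i(e) ≥ (ℓ − q) · k · n. -/
open Finset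

/-- If `F` is a family of `n` sets of size `k` on a finite set `V`, every vertex lies in
exactly `ℓ` members of `F`, every pair of distinct vertices lies in at most `q ≤ ℓ`
members of `F`, then for every pairing `p` of `V` we have
`ℓ · ∑_{e ∈ F} i(e) ≥ (ℓ − q) · k · n`, where `i(e)` is the number of `v ∈ e` with
`p v ∉ e`. -/
theorem sum_unpaired_ge {V : Type*} [Fintype V] [DecidableEq V]
    (n k ℓ q : ℕ) (hq : q ≤ ℓ)
    (F : Finset (Finset V)) (hn : F.card = n)
    (hk : ∀ e ∈ F, e.card = k)
    (hℓ : ∀ v : V, (F.filter (fun e => v ∈ e)).card = ℓ)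
    (hqF : ∀ u v : V, u ≠ v → (F.filter (fun e => u ∈ e ∧ v ∈ e)).card ≤ q)
    (p : V → V) (hp_inv : ∀ v, p (p v) = v) (hp_ne : ∀ v, p v ≠ v) :
    (ℓ - q) * (k * n) ≤ ℓ * ∑ e ∈ F, (e.filter (fun v => p v ∉ e)).card := by
  have h1 : k * n = Fintype.card V * ℓ := by
    have ha : ∑ e ∈ F, e.card = k * n := by
      rw [Finset.sum_congr rfl hk, Finset.sum_const, hn, smul_eq_mul, mul_comm]
    have hb : ∑ e ∈ F, e.card = ∑ v : V, (F.filter (fun e => v ∈ e)).card := by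
      have hc : ∀ e ∈ F, e.card = ∑ v : V, if v ∈ e then 1 else 0 := by
        intro e _
        simp
      rw [Finset.sum_congr rfl hc, Finset.sum_comm]
      simp only [Finset.card_filter]
    rw [← ha, hb, Finset.sum_congr rfl (fun v _ => hℓ v)]
    simp
  have h2 : ∑ e ∈ F, (e.filter (fun v => p v ∉ e)).card
      = ∑ v : V, (F.filter (fun e => v ∈ e ∧ p v ∉ e)).card := by
    have hc : ∀ e ∈ F, (e.filter (fun v => p v ∉ e)).card
        = ∑ v : V, if v ∈ e ∧ p v ∉ e then 1 else 0 := by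
      intro e _
      rw [← Finset.card_filter]
      congr 1
      ext v
      simp
    rw [Finset.sum_congr rfl hc, Finset.sum_comm]
    simp only [Finset.card_filter]
  have h3 : ∀ v : V, ℓ - q ≤ (F.filter (fun e => v ∈ e ∧ p v ∉ e)).card := by
    intro v
    have ha := hqF v (p v) (hp_ne v).symm
    have hb := Finset.card_filter_add_card_filter_not (s := F.filter (fun e => v ∈ e))
      (fun e => p v ∈ e)
    rw [Finset.filter_filter, Finset.filter_filter, hℓ v] at hb
    omega
  have h4 : Fintype.card V * (ℓ - q) ≤ ∑ e ∈ F, (e.filter (fun v => p v ∉ e)).card := by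
    rw [h2]
    calc Fintype.card V * (ℓ - q) = ∑ _v : V, (ℓ - q) := by simp
      _ ≤ _ := Finset.sum_le_sum (fun v _ => h3 v)
  calc (ℓ - q) * (k * n) = ℓ * (Fintype.card V * (ℓ - q)) := by rw [h1]; ring
    _ ≤ _ := Nat.mul_le_mul_left _ h4
end

section
/- Let V be a finite set and F a finite family of n six-element subsets of V such that every element of V belongs to exactly 3 members of F and every pair of distinct elements of V belongs to at most 2 members of F. Then for every pairing p of V there exists a transversal S of p such that the number of e ∈ F with |e ∩ S| ≥ 3 is at most 85n/96, i.e., 96·|{e ∈ F : |e ∩ S| ≥ 3}| ≤ 85n. -/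
open Finset

namespace HexAux

/-- The transversals of `p`. -/
def trans {V : Type*} [Fintype V] [DecidableEq V] (p : V → V) : Finset (Finset V) :=
  univ.filter (fun S => ∀ v, v ∈ S ↔ p v ∉ S)

/-- Flip the pairs meeting `T`. -/
def flip {V : Type*} [Fintype V] [DecidableEq V] (p : V → V) (T S : Finset V) : Finset V :=
  univ.filter (fun v => ¬ (v ∈ S ↔ (v ∈ T ∨ p v ∈ T)))

lemma flip_flip {V : Type*} [Fintype V] [DecidableEq V] (p : V → V) (T S : Finset V) :
    flip p T (flip p T S) = S := by
  ext v
  simp only [flip, mem_filter, mem_univ, true_and]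
  tauto

lemma flip_mem {V : Type*} [Fintype V] [DecidableEq V] (p : V → V)
    (hp_inv : ∀ v, p (p v) = v) (T S : Finset V) (hS : S ∈ trans p) :
    flip p T S ∈ trans p := by
  simp only [trans, flip, mem_filter, mem_univ, true_and, hp_inv] at *
  intro v
  have := hS v
  tauto

lemma trans_nonempty {V : Type*} [Fintype V] [DecidableEq V] (p : V → V)
    (hp_inv : ∀ v, p (p v) = v) (hp_ne : ∀ v, p v ≠ v) : (trans p).Nonempty := by
  refine ⟨univ.filter (fun v => Fintype.equivFin V v < Fintype.equivFin V (p v)), ?_⟩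
  simp only [trans, mem_filter, mem_univ, true_and, hp_inv, not_lt]
  intro v
  constructor
  · exact le_of_lt
  · intro h
    refine lt_of_le_of_ne h ?_
    intro h2
    exact hp_ne v ((Fintype.equivFin V).injective h2).symm

lemma half {V : Type*} [Fintype V] [DecidableEq V] (p : V → V)
    (hp_inv : ∀ v, p (p v) = v) (e S : Finset V) (hS : S ∈ trans p) :
    (e.filter (fun v => p v ∈ e)).card = 2 * (e.filter (fun v => p v ∈ e) ∩ S).card := by
  simp only [trans, mem_filter, mem_univ, true_and] at hS
  have h1 := card_inter_add_card_sdiff (e.filter (fun v => p v ∈ e)) S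
  have h2 : (e.filter (fun v => p v ∈ e) ∩ S).card = (e.filter (fun v => p v ∈ e) \ S).card := by
    apply card_bij' (fun v _ => p v) (fun v _ => p v)
    · intro v hv
      have := hS v
      simp only [mem_inter, mem_sdiff, mem_filter, hp_inv] at *
      tauto
    · intro v hv
      have := hS v
      simp only [mem_inter, mem_sdiff, mem_filter, hp_inv] at *
      tauto
    · intro v _
      exact hp_inv v
    · intro v _
      exact hp_inv v
  omega

lemma count_pow {V : Type*} [DecidableEq V] (U : Finset V) (j : ℕ) :
    (U.powerset.filter (fun T => 3 ≤ j + T.card)).card =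
      ∑ m ∈ range (U.card + 1), U.card.choose m * (if 3 ≤ j + m then 1 else 0) := by
  rw [card_filter]
  have := sum_powerset_apply_card (fun m => if 3 ≤ j + m then 1 else 0) (x := U)
  simpa using this

lemma inner_count {V : Type*} [Fintype V] [DecidableEq V] (p : V → V)
    (hp_inv : ∀ v, p (p v) = v) (e S : Finset V) (hS : S ∈ trans p) (j : ℕ)
    (hj : (e.filter (fun v => p v ∈ e)).card = 2 * j) :
    ((e.filter (fun v => p v ∉ e)).powerset.filter
      (fun T => 3 ≤ (e ∩ flip p T S).card)).card =
    ((e.filter (fun v => p v ∉ e)).powerset.filter (fun T => 3 ≤ j + T.card)).card := by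
  set U := e.filter (fun v => p v ∉ e) with hU
  have key : ∀ T ⊆ U, (e ∩ flip p T S).card = j + (symmDiff (S ∩ U) T).card := by
    intro T hT
    have h1 := card_filter_add_card_filter_not (s := e ∩ flip p T S) (fun v => p v ∈ e)
    have h2 : (e ∩ flip p T S).filter (fun v => p v ∈ e)
        = e.filter (fun v => p v ∈ e) ∩ flip p T S := by
      ext v; simp only [mem_filter, mem_inter]; tauto
    have h3 : (e ∩ flip p T S).filter (fun v => ¬ p v ∈ e) = symmDiff (S ∩ U) T := by
      ext v
      have a := @hT v
      have b := @hT (p v)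
      simp only [hU, mem_filter, hp_inv] at a b
      simp only [mem_filter, mem_inter, flip, mem_symmDiff, hU, mem_univ, true_and]
      tauto
    have h4 := half p hp_inv e _ (flip_mem p hp_inv T S hS)
    rw [h2, h3] at h1
    omega
  apply card_bij' (fun T _ => symmDiff (S ∩ U) T) (fun T _ => symmDiff (S ∩ U) T)
  · intro T hT
    simp only [mem_filter, mem_powerset] at *
    rw [key T hT.1] at hT
    refine ⟨?_, hT.2⟩
    intro v hv
    have := @hT.1 v
    simp only [mem_symmDiff, mem_inter] at hv
    tauto
  · intro T hT
    simp only [mem_filter, mem_powerset] at *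
    have hs : symmDiff (S ∩ U) T ⊆ U := by
      intro v hv
      have := @hT.1 v
      simp only [mem_symmDiff, mem_inter] at hv
      tauto
    refine ⟨hs, ?_⟩
    rw [key _ hs, symmDiff_symmDiff_cancel_left]
    exact hT.2
  · intro T _
    exact symmDiff_symmDiff_cancel_left _ _
  · intro T _
    exact symmDiff_symmDiff_cancel_left _ _

lemma edge_bound {V : Type*} [Fintype V] [DecidableEq V] (p : V → V)
    (hp_inv : ∀ v, p (p v) = v) (hp_ne : ∀ v, p v ≠ v) (e : Finset V) (he : e.card = 6) :
    192 * ((trans p).filter (fun S => 3 ≤ (e ∩ S).card)).card ≤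
      (126 + 11 * (e.filter (fun v => p v ∈ e)).card) * (trans p).card := by
  obtain ⟨S0, hS0⟩ := trans_nonempty p hp_inv hp_ne
  obtain ⟨j, hj⟩ : ∃ j, (e.filter (fun v => p v ∈ e)).card = 2 * j := ⟨_, half p hp_inv e S0 hS0⟩
  have hsplit := card_filter_add_card_filter_not (s := e) (fun v => p v ∈ e)
  set U := e.filter (fun v => p v ∉ e) with hU
  have hUc : U.card = 6 - 2 * j := by omega
  have hj3 : j ≤ 3 := by omega
  have dc : ∑ T ∈ U.powerset, ((trans p).filter (fun S => 3 ≤ (e ∩ flip p T S).card)).card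
      = ∑ S ∈ trans p, (U.powerset.filter (fun T => 3 ≤ (e ∩ flip p T S).card)).card := by
    simp only [card_filter]
    exact sum_comm
  have l : ∀ T, ((trans p).filter (fun S => 3 ≤ (e ∩ flip p T S).card)).card
      = ((trans p).filter (fun S => 3 ≤ (e ∩ S).card)).card := by
    intro T
    apply card_bij' (fun S _ => flip p T S) (fun S _ => flip p T S)
    · intro S hS
      simp only [mem_filter] at *
      exact ⟨flip_mem p hp_inv T S hS.1, hS.2⟩
    · intro S hS
      simp only [mem_filter, flip_flip] at *
      exact ⟨flip_mem p hp_inv T S hS.1, hS.2⟩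
    · intro S _
      exact flip_flip _ _ _
    · intro S _
      exact flip_flip _ _ _
  rw [sum_congr rfl (fun T _ => l T),
    sum_congr rfl (fun S hS => inner_count p hp_inv e S hS j hj)] at dc
  simp only [sum_const, card_powerset, smul_eq_mul, count_pow] at dc
  rw [← hU, hUc] at dc
  rw [hj]
  interval_cases j <;> simp [sum_range_succ, Nat.choose] at dc <;> omega

end HexAux

open HexAux in
/-- Hexagon game on the hexagonal grid (`k = 6`, `ℓ = 3`, `q = 2`), threshold `s = 3`:
for every pairing `p` there is a transversal `S` such that the number of `e ∈ F` with
`|e ∩ S| ≥ 3` is at most `85n/96`. -/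
theorem hexagon_s3_pairing_upper {V : Type*} [Fintype V] [DecidableEq V]
    (n : ℕ) (F : Finset (Finset V)) (hn : F.card = n)
    (hF : ∀ e ∈ F, e.card = 6)
    (hdeg : ∀ v : V, (F.filter (fun e => v ∈ e)).card = 3)
    (hpair : ∀ u v : V, u ≠ v → (F.filter (fun e => u ∈ e ∧ v ∈ e)).card ≤ 2)
    (p : V → V) (hp_inv : ∀ v, p (p v) = v) (hp_ne : ∀ v, p v ≠ v) :
    ∃ S : Finset V, (∀ v, v ∈ S ↔ p v ∉ S) ∧
      96 * (F.filter (fun e => 3 ≤ (e ∩ S).card)).card ≤ 85 * n := by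
  have hV : 3 * Fintype.card V = 6 * n := by
    have h : ∑ v : V, (F.filter (fun e => v ∈ e)).card = ∑ e ∈ F, e.card := by
      simp only [card_filter]
      rw [sum_comm]
      refine sum_congr rfl fun e _ => ?_
      simp
    rw [sum_congr rfl (fun v _ => hdeg v), sum_congr rfl (fun e he => hF e he)] at h
    simp only [sum_const, smul_eq_mul, card_univ, hn] at h
    omega
  have hW : ∑ e ∈ F, (e.filter (fun v => p v ∈ e)).card ≤ 4 * n := by
    have h : ∑ e ∈ F, (e.filter (fun v => p v ∈ e)).card
        = ∑ v : V, (F.filter (fun e => v ∈ e ∧ p v ∈ e)).card := by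
      simp only [card_filter]
      rw [sum_comm' (t' := univ) (s' := fun v => F.filter (fun e => v ∈ e))]
      · refine sum_congr rfl fun v _ => ?_
        rw [sum_filter]
        refine sum_congr rfl fun e _ => ?_
        by_cases h1 : v ∈ e <;> simp [h1]
      · intro e v
        simp
    rw [h]
    calc _ ≤ ∑ v : V, 2 := sum_le_sum fun v _ => hpair v (p v) (hp_ne v).symm
      _ = 2 * Fintype.card V := by simp [mul_comm]
      _ ≤ 4 * n := by omega
  have tot : ∑ S ∈ trans p, 192 * (F.filter (fun e => 3 ≤ (e ∩ S).card)).card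
      ≤ ∑ S ∈ trans p, 170 * n := by
    have h : ∑ S ∈ trans p, 192 * (F.filter (fun e => 3 ≤ (e ∩ S).card)).card
        = ∑ e ∈ F, 192 * ((trans p).filter (fun S => 3 ≤ (e ∩ S).card)).card := by
      rw [← mul_sum, ← mul_sum]
      simp only [card_filter]
      rw [sum_comm]
    rw [h]
    calc _ ≤ ∑ e ∈ F, (126 + 11 * (e.filter (fun v => p v ∈ e)).card) * (trans p).card :=
          sum_le_sum fun e he => edge_bound p hp_inv hp_ne e (hF e he)
      _ = (126 * n + 11 * ∑ e ∈ F, (e.filter (fun v => p v ∈ e)).card) * (trans p).card := by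
          rw [← sum_mul, sum_add_distrib, ← mul_sum, sum_const, hn, smul_eq_mul, mul_comm n]
      _ ≤ (170 * n) * (trans p).card := Nat.mul_le_mul_right _ (by omega)
      _ = _ := by rw [sum_const, smul_eq_mul, mul_comm]
  obtain ⟨S, hS, hle⟩ := exists_le_of_sum_le (trans_nonempty p hp_inv hp_ne) tot
  refine ⟨S, (mem_filter.mp hS).2, by omega⟩
end

section
/- Let V be a finite set and F a finite family of n four-element subsets of V such that every element of V belongs to exactly 12 members of F and every pair of distinct elements of V belongs to at most 2 members of F. Then for every pairing p of V there exists a transversal S of p such that the number of e ∈ F with e ∩ S ≠ ∅ is at most 23n/24, i.e., 24·|{e ∈ F : e ∩ S ≠ ∅}| ≤ 23n. -/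
open Finset

lemma rh_count {V : Type*} [Fintype V] [DecidableEq V] (T : Finset V) (hT : T.card = 4)
    (g : V → Bool) :
    16 * (univ.filter (fun f : V → Bool => ∀ v ∈ T, f v = g v)).card
      = Fintype.card (V → Bool) := by
  have h1 : (univ.filter (fun f : V → Bool => ∀ v ∈ T, f v = g v))
      = Fintype.piFinset (fun v => if v ∈ T then {g v} else (univ : Finset Bool)) := by
    ext f
    simp only [mem_filter, mem_univ, true_and, Fintype.mem_piFinset]
    refine forall_congr' fun v => ?_
    by_cases hv : v ∈ T <;> simp [hv]
  rw [h1, Fintype.card_piFinset]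
  have h2 : ∀ v : V, (if v ∈ T then {g v} else (univ : Finset Bool)).card
      = if v ∈ T then 1 else 2 := by
    intro v; by_cases hv : v ∈ T <;> simp [hv]
  simp only [h2]
  rw [← Finset.prod_mul_prod_compl T]
  have h3 : ∏ v ∈ T, (if v ∈ T then 1 else 2) = 1 :=
    Finset.prod_eq_one (fun v hv => by simp [hv])
  have h4 : ∏ v ∈ Tᶜ, (if v ∈ T then 1 else 2) = ∏ v ∈ Tᶜ, 2 :=
    Finset.prod_congr rfl (fun v hv => by simp [Finset.mem_compl.1 hv])
  rw [h3, h4, Finset.prod_const, Fintype.card_fun, Fintype.card_bool, one_mul]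
  have h5 := Finset.card_add_card_compl T
  rw [← h5, hT, pow_add]
  norm_num

lemma rh_rep {V : Type*} [Fintype V] [DecidableEq V]
    (p : V → V) (hp_inv : ∀ v, p (p v) = v) (hp_ne : ∀ v, p v ≠ v) :
    ∃ (r : V → V) (b : V → Bool), (∀ v, r (p v) = r v) ∧ (∀ v, b (p v) = !(b v)) ∧
      (∀ u v, r u = r v → u = v ∨ u = p v) := by
  classical
  let i : V → ℕ := fun v => (Fintype.equivFin V v).val
  have hi : ∀ u v, i u = i v → u = v := fun u v h =>
    (Fintype.equivFin V).injective (Fin.ext h)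
  have hne : ∀ v, i (p v) ≠ i v := fun v h => hp_ne v (hi _ _ h)
  refine ⟨fun v => if i v < i (p v) then v else p v, fun v => decide (i v < i (p v)), ?_, ?_, ?_⟩
  · intro v
    have := hne v
    simp only [hp_inv]
    split_ifs <;> first | rfl | omega
  · intro v
    have := hne v
    simp only [hp_inv]
    by_cases h : i v < i (p v)
    · simp [h, h.le]
    · have h' : i (p v) < i v := by omega
      simp [h, h']
  · intro u v h
    dsimp only at h
    split_ifs at h
    · exact Or.inl h
    · exact Or.inr h
    · right; rw [← h, hp_inv]
    · left; rw [← hp_inv u, h, hp_inv]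

/-- Rhombus game on the triangular grid (`k = 4`, `ℓ = 12`, `q = 2`), threshold `s = 1`:
for every pairing `p` there is a transversal `S` such that the number of `e ∈ F` meeting
`S` is at most `23n/24`. -/
theorem rhombus_s1_pairing_upper {V : Type*} [Fintype V] [DecidableEq V]
    (n : ℕ) (F : Finset (Finset V)) (hn : F.card = n)
    (hF : ∀ e ∈ F, e.card = 4)
    (hdeg : ∀ v : V, (F.filter (fun e => v ∈ e)).card = 12)
    (hpair : ∀ u v : V, u ≠ v → (F.filter (fun e => u ∈ e ∧ v ∈ e)).card ≤ 2)
    (p : V → V) (hp_inv : ∀ v, p (p v) = v) (hp_ne : ∀ v, p v ≠ v) :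
    ∃ S : Finset V, (∀ v, v ∈ S ↔ p v ∉ S) ∧
      24 * (F.filter (fun e => (e ∩ S).Nonempty)).card ≤ 23 * n := by
  classical
  obtain ⟨r, b, hr, hb, hrinj⟩ := rh_rep p hp_inv hp_ne
  -- degree counting
  have hV : 12 * Fintype.card V = 4 * n := by
    have h := Finset.sum_card_bipartiteAbove_eq_sum_card_bipartiteBelow
      (s := (univ : Finset V)) (t := F) (fun v e => v ∈ e)
    simp only [Finset.bipartiteAbove, Finset.bipartiteBelow, hdeg] at h
    have h' : ∑ e ∈ F, (univ.filter (fun v => v ∈ e)).card = ∑ e ∈ F, 4 :=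
      Finset.sum_congr rfl (fun e he => by simpa using hF e he)
    rw [h'] at h
    simp only [sum_const, card_univ, smul_eq_mul, hn] at h
    omega
  have hbad : (F.filter (fun e => ∃ v ∈ e, p v ∈ e)).card ≤ Fintype.card V := by
    have h := Finset.sum_card_bipartiteAbove_eq_sum_card_bipartiteBelow
      (s := (univ : Finset V)) (t := F) (fun v e => v ∈ e ∧ p v ∈ e)
    simp only [Finset.bipartiteAbove, Finset.bipartiteBelow] at h
    have h1 : ∑ v : V, (F.filter (fun e => v ∈ e ∧ p v ∈ e)).card ≤ ∑ v : V, 2 :=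
      Finset.sum_le_sum fun v _ => hpair v (p v) (hp_ne v).symm
    have h2 : ∑ e ∈ F.filter (fun e => ∃ v ∈ e, p v ∈ e), 2 ≤
        ∑ e ∈ F, (univ.filter (fun v => v ∈ e ∧ p v ∈ e)).card := by
      refine le_trans (Finset.sum_le_sum ?_)
        (Finset.sum_le_sum_of_subset (Finset.filter_subset _ _))
      intro e he
      obtain ⟨v, hv, hpv⟩ := (mem_filter.1 he).2
      rw [← Finset.card_pair (hp_ne v)]
      refine Finset.card_le_card ?_
      intro x hx
      rcases mem_insert.1 hx with rfl | hx
      · simp [hv, hpv, hp_inv]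
      · rw [mem_singleton.1 hx]; simp [hv, hpv]
    simp only [sum_const, card_univ, smul_eq_mul] at h1 h2
    omega
  have hgb := Finset.card_filter_add_card_filter_not (s := F) (fun e => ∃ v ∈ e, p v ∈ e)
  let S : (V → Bool) → Finset V := fun f => univ.filter (fun v => f (r v) ≠ b v)
  have hS : ∀ f v, v ∈ S f ↔ f (r v) ≠ b v := fun f v => by simp [S]
  have hgood : ∀ e ∈ F.filter (fun e => ¬ ∃ v ∈ e, p v ∈ e),
      Fintype.card (V → Bool) ≤
        16 * (univ.filter (fun f : V → Bool => ¬ (e ∩ S f).Nonempty)).card := by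
    intro e he
    obtain ⟨heF, hg⟩ := mem_filter.1 he
    have hinj : Set.InjOn r (e : Set V) := by
      intro u hu v hv huv
      rcases hrinj u v huv with h | h
      · exact h
      · exact absurd ⟨v, hv, h ▸ hu⟩ hg
    have hT : (e.image r).card = 4 := by rw [Finset.card_image_of_injOn hinj, hF e heF]
    have hgex : ∃ g : V → Bool, ∀ v ∈ e, g (r v) = b v := by
      refine ⟨fun x => decide (∃ v ∈ e, r v = x ∧ b v = true), fun v hv => ?_⟩
      by_cases hbv : b v = true
      · simp only [hbv, decide_eq_true_eq]; exact ⟨v, hv, rfl, hbv⟩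
      · rw [Bool.not_eq_true] at hbv
        simp only [hbv, decide_eq_false_iff_not]
        rintro ⟨u, hu, huv, hbu⟩
        rw [hinj hu hv huv, hbv] at hbu
        exact absurd hbu (by simp)
    obtain ⟨g, hgv⟩ := hgex
    rw [← rh_count (e.image r) hT g]
    refine Nat.mul_le_mul_left _ (Finset.card_le_card ?_)
    intro f hf
    have hf := (mem_filter.1 hf).2
    refine mem_filter.2 ⟨mem_univ _, ?_⟩
    rintro ⟨v, hv⟩
    obtain ⟨hve, hvS⟩ := mem_inter.1 hv
    refine (hS f v).1 hvS ?_
    rw [hf (r v) (mem_image_of_mem r hve), hgv v hve]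
  have hdc := Finset.sum_card_bipartiteAbove_eq_sum_card_bipartiteBelow
      (s := (univ : Finset (V → Bool))) (t := F) (fun f e => ¬ (e ∩ S f).Nonempty)
  simp only [Finset.bipartiteAbove, Finset.bipartiteBelow] at hdc
  have hsum : (F.filter (fun e => ¬ ∃ v ∈ e, p v ∈ e)).card * Fintype.card (V → Bool) ≤
      16 * ∑ f : V → Bool, (F.filter (fun e => ¬ (e ∩ S f).Nonempty)).card := by
    rw [hdc, Finset.mul_sum, ← smul_eq_mul, ← Finset.sum_const]
    exact le_trans (Finset.sum_le_sum hgood)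
      (Finset.sum_le_sum_of_subset (Finset.filter_subset _ _))
  have hex : ∃ f ∈ (univ : Finset (V → Bool)),
      n ≤ 24 * (F.filter (fun e => ¬ (e ∩ S f).Nonempty)).card := by
    refine Finset.exists_le_of_sum_le (Finset.univ_nonempty) ?_
    rw [← Finset.mul_sum, Finset.sum_const, card_univ, smul_eq_mul]
    have h2 : 2 * n ≤ 3 * (F.filter (fun e => ¬ ∃ v ∈ e, p v ∈ e)).card := by omega
    have h3 := Nat.mul_le_mul_right (Fintype.card (V → Bool)) h2
    nlinarith
  obtain ⟨f, -, hf⟩ := hex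
  refine ⟨S f, fun v => ?_, ?_⟩
  · rw [hS, hS, hr, hb]
    cases f (r v) <;> cases b v <;> simp
  · have := Finset.card_filter_add_card_filter_not (s := F) (fun e => (e ∩ S f).Nonempty)
    omega
end

section
/- Let V be a finite set and F a finite family of n three-element subsets of V. Then for every pairing p of V there exists a transversal S of p such that the number of e ∈ F with |e ∩ S| ≥ 2 is at most n/2, i.e., 2·|{e ∈ F : |e ∩ S| ≥ 2}| ≤ n. -/
open Finset

/-- For any family `F` of `n` three-element subsets of a finite set `V` and any pairing
`p` of `V`, there is a transversal `S` of `p` such that the number of `e ∈ F` with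
`|e ∩ S| ≥ 2` is at most `n/2`. -/
theorem triangle_s2_pairing_upper {V : Type*} [Fintype V] [DecidableEq V]
    (n : ℕ) (F : Finset (Finset V)) (hn : F.card = n)
    (hF : ∀ e ∈ F, e.card = 3)
    (p : V → V) (hp_inv : ∀ v, p (p v) = v) (hp_ne : ∀ v, p v ≠ v) :
    ∃ S : Finset V, (∀ v, v ∈ S ↔ p v ∉ S) ∧
      2 * (F.filter (fun e => 2 ≤ (e ∩ S).card)).card ≤ n := by
  classical
  let f := Fintype.equivFin V
  have hf : ∀ v, f (p v) ≠ f v := fun v h => hp_ne v (f.injective h)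
  -- any transversal: pick the smaller element of every pair
  obtain ⟨S, hS⟩ : ∃ S : Finset V, ∀ v, v ∈ S ↔ p v ∉ S := by
    refine ⟨Finset.univ.filter (fun v => f v < f (p v)), fun v => ?_⟩
    simp only [Finset.mem_filter, Finset.mem_univ, true_and, hp_inv, not_lt]
    exact ⟨le_of_lt, fun h => lt_of_le_of_ne h (hf v).symm⟩
  have hSc : ∀ v, v ∈ Sᶜ ↔ p v ∉ Sᶜ := by
    intro v
    simp only [Finset.mem_compl, not_not]
    have := hS v
    tauto
  -- each triple is hit twice by exactly one of `S`, `Sᶜ`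
  have hcompl : F.filter (fun e => 2 ≤ (e ∩ Sᶜ).card)
      = F.filter (fun e => ¬ 2 ≤ (e ∩ S).card) := by
    apply Finset.filter_congr
    intro e he
    have h3 := hF e he
    have h := Finset.card_inter_add_card_sdiff e S
    have h' : e ∩ Sᶜ = e \ S := by
      ext x
      simp
    rw [h']
    omega
  have hsum := Finset.card_filter_add_card_filter_not (s := F) (fun e => 2 ≤ (e ∩ S).card)
  rcases le_total (2 * (F.filter (fun e => 2 ≤ (e ∩ S).card)).card) n with h | h
  · exact ⟨S, hS, h⟩
  · refine ⟨Sᶜ, hSc, ?_⟩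
    rw [hcompl]
    omega
end

section
/- Let V be a finite set and F a finite family of n three-element subsets of V. Then for every pairing p of V there exists a transversal S of p such that the number of e ∈ F with e ⊆ S is at most n/8, i.e., 8·|{e ∈ F : e ⊆ S}| ≤ n. -/
open Finset

/-- The finset of transversals of `p` containing `A`. -/
def transv {V : Type*} [Fintype V] [DecidableEq V] (p : V → V) (A : Finset V) :
    Finset (Finset V) :=
  univ.filter (fun S => (∀ v, v ∈ S ↔ p v ∉ S) ∧ A ⊆ S)

lemma transv_insert {V : Type*} [Fintype V] [DecidableEq V] (p : V → V)
    (hp_inv : ∀ v, p (p v) = v) (hp_ne : ∀ v, p v ≠ v) (A : Finset V) (v : V) (hv : v ∉ A) :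
    2 * (transv p (insert v A)).card ≤ (transv p A).card := by
  by_cases hpv : p v ∈ A
  · have : transv p (insert v A) = ∅ := by
      apply Finset.eq_empty_of_forall_notMem
      intro S hS
      simp only [transv, mem_filter, mem_univ, true_and] at hS
      have h1 := hS.2 (mem_insert_self v A)
      have h2 := hS.2 (mem_insert_of_mem hpv)
      exact (hS.1 v).1 h1 h2
    simp [this]
  · have hinj : Function.Injective (fun S : Finset V => symmDiff S {v, p v}) :=
      symmDiff_left_injective _
    have hdisj : Disjoint (transv p (insert v A))
        ((transv p (insert v A)).image (fun S : Finset V => symmDiff S {v, p v})) := by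
      rw [Finset.disjoint_left]
      intro S hS hS'
      obtain ⟨R, hR, rfl⟩ := Finset.mem_image.1 hS'
      simp only [transv, mem_filter, mem_univ, true_and] at hS hR
      have h1 := hS.2 (mem_insert_self v A)
      have h2 := hR.2 (mem_insert_self v A)
      simp [mem_symmDiff, h2] at h1
    have hc := Finset.card_union_of_disjoint hdisj
    rw [Finset.card_image_of_injective _ hinj] at hc
    rw [two_mul, ← hc]
    apply Finset.card_le_card
    apply Finset.union_subset
    · intro S hS
      simp only [transv, mem_filter, mem_univ, true_and] at hS ⊢
      exact ⟨hS.1, fun x hx => hS.2 (mem_insert_of_mem hx)⟩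
    · intro S hS'
      obtain ⟨R, hR, rfl⟩ := Finset.mem_image.1 hS'
      simp only [transv, mem_filter, mem_univ, true_and] at hR ⊢
      refine ⟨fun w => ?_, fun x hx => ?_⟩
      · have h1 := hR.1 w
        have e1 : p w = v ↔ w = p v :=
          ⟨fun h => by rw [← h, hp_inv], fun h => by rw [h, hp_inv]⟩
        have e2 : p w = p v ↔ w = v :=
          ⟨fun h => by rw [← hp_inv w, h, hp_inv], fun h => by rw [h]⟩
        simp only [mem_symmDiff, mem_insert, mem_singleton, e1, e2]
        tauto
      · have h1 := hR.2 (mem_insert_of_mem hx)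
        have h2 : x ≠ v := fun h => hv (h ▸ hx)
        have h3 : x ≠ p v := fun h => hpv (h ▸ hx)
        simp [mem_symmDiff, h1, h2, h3]

lemma transv_pow {V : Type*} [Fintype V] [DecidableEq V] (p : V → V)
    (hp_inv : ∀ v, p (p v) = v) (hp_ne : ∀ v, p v ≠ v) (A : Finset V) :
    2 ^ A.card * (transv p A).card ≤ (transv p ∅).card := by
  induction A using Finset.induction_on with
  | empty => simp
  | insert v A hv ih =>
    rw [Finset.card_insert_of_notMem hv, pow_succ, mul_assoc]
    exact (Nat.mul_le_mul_left _ (transv_insert p hp_inv hp_ne A v hv)).trans ih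

lemma transv_nonempty {V : Type*} [Fintype V] [DecidableEq V] (p : V → V)
    (hp_inv : ∀ v, p (p v) = v) (hp_ne : ∀ v, p v ≠ v) : (transv p ∅).Nonempty := by
  let f := Fintype.equivFin V
  refine ⟨univ.filter (fun v => f v < f (p v)), ?_⟩
  simp only [transv, mem_filter, mem_univ, true_and, hp_inv, empty_subset, and_true, not_lt]
  intro v
  exact ⟨le_of_lt, fun h => lt_of_le_of_ne h (fun h' => hp_ne v (f.injective h').symm)⟩

/-- For any family `F` of `n` three-element subsets of a finite set `V` and any pairing
`p` of `V`, there is a transversal `S` of `p` such that the number of `e ∈ F` fully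
contained in `S` is at most `n/8`. -/
theorem triangle_s3_pairing_upper {V : Type*} [Fintype V] [DecidableEq V]
    (n : ℕ) (F : Finset (Finset V)) (hn : F.card = n)
    (hF : ∀ e ∈ F, e.card = 3)
    (p : V → V) (hp_inv : ∀ v, p (p v) = v) (hp_ne : ∀ v, p v ≠ v) :
    ∃ S : Finset V, (∀ v, v ∈ S ↔ p v ∉ S) ∧
      8 * (F.filter (fun e => e ⊆ S)).card ≤ n := by
  have hsum : ∑ S ∈ transv p ∅, 8 * (F.filter (fun e => e ⊆ S)).card
      ≤ ∑ S ∈ transv p ∅, n := by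
    rw [← Finset.mul_sum]
    have hdc : ∑ S ∈ transv p ∅, (F.filter (fun e => e ⊆ S)).card
        = ∑ e ∈ F, ((transv p ∅).filter (fun S => e ⊆ S)).card := by
      simp only [Finset.card_filter]
      exact Finset.sum_comm
    rw [hdc, Finset.mul_sum, Finset.sum_const, smul_eq_mul, mul_comm, ← hn, ← smul_eq_mul,
      ← Finset.sum_const]
    apply Finset.sum_le_sum
    intro e he
    have h := transv_pow p hp_inv hp_ne e
    rw [hF e he] at h
    have : (transv p ∅).filter (fun S => e ⊆ S) = transv p e := by
      ext S
      simp [transv]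
    rw [this]
    simpa using h
  obtain ⟨S, hS, h⟩ := Finset.exists_le_of_sum_le (transv_nonempty p hp_inv hp_ne) hsum
  simp only [transv, mem_filter, mem_univ, true_and] at hS
  exact ⟨S, hS.1, h⟩
end

section
/- There exists a pairing p of ℤ × ℤ such that for every (x, y) ∈ ℤ × ℤ, the unit square Q(x,y) = {(x,y), (x+1,y), (x,y+1), (x+1,y+1)} contains a pair, i.e., there is some v ∈ Q(x,y) with p(v) ∈ Q(x,y). Consequently, every transversal S of p satisfies 1 ≤ |Q(x,y) ∩ S| ≤ 3 for every (x, y) ∈ ℤ × ℤ. -/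
/-- The unit square of the square grid with bottom-left corner `(x, y)`. -/
def unitSquare (x y : ℤ) : Finset (ℤ × ℤ) :=
  {(x, y), (x + 1, y), (x, y + 1), (x + 1, y + 1)}

/-- Observation 4.1: there is a pairing `p` of `ℤ × ℤ` such that every unit square
contains a pair; consequently every transversal `S` of `p` intersects every unit square
in at least `1` and at most `3` vertices. -/
theorem square_grid_pairing :
    ∃ p : ℤ × ℤ → ℤ × ℤ,
      (∀ v, p (p v) = v) ∧ (∀ v, p v ≠ v) ∧
      (∀ x y : ℤ, ∃ v ∈ unitSquare x y, p v ∈ unitSquare x y) ∧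
      (∀ S : Set (ℤ × ℤ), (∀ v, v ∈ S ↔ p v ∉ S) →
        ∀ x y : ℤ,
          1 ≤ ((unitSquare x y : Set (ℤ × ℤ)) ∩ S).ncard ∧
          ((unitSquare x y : Set (ℤ × ℤ)) ∩ S).ncard ≤ 3) := by
  have key : ∃ p : ℤ × ℤ → ℤ × ℤ,
      (∀ v, p (p v) = v) ∧ (∀ v, p v ≠ v) ∧
      (∀ x y : ℤ, ∃ v ∈ unitSquare x y, p v ∈ unitSquare x y) := by
    refine ⟨fun v => if (v.1 + v.2) % 2 = 0 then (v.1, v.2 + 1) else (v.1, v.2 - 1), ?_, ?_, ?_⟩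
    · rintro ⟨a, b⟩
      by_cases h : (a + b) % 2 = 0
      · have h' : ¬ (a + (b + 1)) % 2 = 0 := by omega
        simp only [h, h', if_true, if_false]
        simp
      · have h' : (a + (b - 1)) % 2 = 0 := by omega
        simp only [h, h', if_true, if_false]
        simp
    · rintro ⟨a, b⟩
      by_cases h : (a + b) % 2 = 0
      · simp [h]
      · simp [h]
    · intro x y
      by_cases h : (x + y) % 2 = 0
      · refine ⟨(x, y), by simp [unitSquare], ?_⟩
        simp only [h, if_true]
        simp [unitSquare]
      · have h' : (x + 1 + y) % 2 = 0 := by omega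
        refine ⟨(x + 1, y), by simp [unitSquare], ?_⟩
        simp only [h', if_true]
        simp [unitSquare]
  obtain ⟨p, h1, h2, h3⟩ := key
  refine ⟨p, h1, h2, h3, ?_⟩
  intro S hS x y
  obtain ⟨v, hv, hpv⟩ := h3 x y
  have hfin : (unitSquare x y : Set (ℤ × ℤ)).Finite := Finset.finite_toSet _
  constructor
  · rw [Nat.succ_le_iff, Set.ncard_pos (hfin.inter_of_left S)]
    by_cases h : v ∈ S
    · exact ⟨v, hv, h⟩
    · exact ⟨p v, hpv, by by_contra h'; exact h ((hS v).2 h')⟩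
  · have hlt : ((unitSquare x y : Set (ℤ × ℤ)) ∩ S).ncard
        < (unitSquare x y : Set (ℤ × ℤ)).ncard := by
      apply Set.ncard_lt_ncard _ hfin
      refine ⟨Set.inter_subset_left, fun hsub => ?_⟩
      exact (hS v).1 (hsub hv).2 (hsub hpv).2
    have hcard : (unitSquare x y : Set (ℤ × ℤ)).ncard ≤ 4 := by
      rw [Set.ncard_coe_finset]
      exact Finset.card_le_four
    omega
end
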